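/- For every ε > 0 there is a constant C_ε such that every finite set Λ ⊂ P² = {(ξ₁, ξ₂, ξ₁² + ξ₂²) : |ξ₁|, |ξ₂| ≤ 1/2} ⊂ ℝ³ satisfies E₂(Λ) ≤ C_ε · |Λ|^{2+ε}. -/

import Mathlib

open MeasureTheory Real

noncomputable section

/-- The `k`-energy of a set `Λ`: the number of `2k`-tuples `(λ₁,…,λ₂ₖ) ∈ Λ^{2k}` with
`λ₁ + ⋯ + λ_k = λ_{k+1} + ⋯ + λ_{2k}`. -/
def energy {E : Type*} [AddCommMonoid E] (k : ℕ) (Λ : Set E) : ℕ :=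
  Nat.card {fg : (Fin k → E) × (Fin k → E) //
    (∀ i, fg.1 i ∈ Λ) ∧ (∀ i, fg.2 i ∈ Λ) ∧ ∑ i, fg.1 i = ∑ i, fg.2 i}

/-- The truncated elliptic paraboloid `P² ⊂ ℝ³`. -/
def parab2 : Set (EuclideanSpace ℝ (Fin 3)) :=
  {x | |x 0| ≤ 1 / 2 ∧ |x 1| ≤ 1 / 2 ∧ x 2 = (x 0) ^ 2 + (x 1) ^ 2}

/-!
If `a, b, c, d` lie on the paraboloid and `a + b = c + d`, then comparing the last coordinates shows
that the projections of `a`, `c`, `d` to the plane satisfy `(c - a) · (d - a) = 0`, and `a`, `c`,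
`d` determine `b`. So the energy is at most the number of right angles spanned by `N` points of the
plane, which is `O(N² log N)` (Pach and Sharir). Indeed, charge each of them to the richer of the
two lines carrying its legs. A line through `n` of the points is charged `O(nN)` times, since the
other two points determine the vertex of the right angle, and also `O(n³)` times, since the other
leg is no richer. The Szemerédi–Trotter theorem bounds both the total `O(N)` of `n` over the lines
with `n > √N`, and the number `O(N² / k³)` of lines with `n ≥ k` for each `k ≤ √N`, hence the total
`O(N² log N)` of `n³` over the remaining lines. That theorem in turn is the crossing lemma for the
segments between consecutive points on the lines.
-/

open Finset

/-! ### Plane drawings -/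

/-- A non-vertical line `y = slope * x + intercept` in the plane. -/
@[ext]
structure Line where
  slope : ℝ
  intercept : ℝ

namespace Line

variable {k l : Line} {p q : ℝ × ℝ} {x y : ℝ}

/-- The ordinate of the point of `l` with abscissa `x`. -/
def height (l : Line) (x : ℝ) : ℝ := l.slope * x + l.intercept

instance : Membership (ℝ × ℝ) Line := ⟨fun l p => p.2 = l.height p.1⟩

lemma mem_iff : p ∈ l ↔ p.2 = l.height p.1 := Iff.rfl

/-- The line through `p` and `q`. If `p` and `q` have the same abscissa, division by zero makes this
the horizontal line through `p`. -/
def through (p q : ℝ × ℝ) : Line where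
  slope := (q.2 - p.2) / (q.1 - p.1)
  intercept := p.2 - (q.2 - p.2) / (q.1 - p.1) * p.1

lemma left_mem_through (p q : ℝ × ℝ) : p ∈ through p q := by
  simp [mem_iff, height, through]

lemma right_mem_through (h : p.1 ≠ q.1) : q ∈ through p q := by
  have h₀ : q.1 - p.1 ≠ 0 := sub_ne_zero.2 h.symm
  simp only [mem_iff, height, through]
  field_simp
  ring

lemma eq_of_height_eq (hxy : x ≠ y) (hx : k.height x = l.height x)
    (hy : k.height y = l.height y) : k = l := by
  simp only [height] at hx hy
  have hslope : k.slope = l.slope :=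
    mul_right_cancel₀ (sub_ne_zero.2 hxy) (by linear_combination hx - hy)
  exact Line.ext hslope (by rw [hslope] at hx; exact add_left_cancel hx)

lemma eq_of_mem_of_mem (h : p.1 ≠ q.1) (hpk : p ∈ k) (hpl : p ∈ l) (hqk : q ∈ k) (hql : q ∈ l) :
    k = l :=
  eq_of_height_eq h (hpk.symm.trans hpl) (hqk.symm.trans hql)

lemma through_eq (h : p.1 ≠ q.1) (hp : p ∈ l) (hq : q ∈ l) : through p q = l :=
  eq_of_mem_of_mem h (left_mem_through p q) hp (right_mem_through h) hq

lemma height_lt_height_of_slope_lt (hslope : k.slope < l.slope) (hx : k.height x = l.height x)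
    (hxy : x < y) : k.height y < l.height y := by
  simp only [height] at *
  nlinarith

lemma height_le_height_of_slope_le (hslope : k.slope ≤ l.slope) (hx : k.height x = l.height x)
    (hxy : x ≤ y) : k.height y ≤ l.height y := by
  simp only [height] at *
  nlinarith

lemma continuous_height (l : Line) : Continuous l.height := by
  unfold height
  fun_prop

lemma exists_height_eq (hxy : x ≤ y) (hx : k.height x < l.height x)
    (hy : l.height y < k.height y) : ∃ z ∈ Set.Ioo x y, k.height z = l.height z := by
  have hcont : Continuous fun z => k.height z - l.height z :=
    k.continuous_height.sub l.continuous_height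
  obtain ⟨z, hz, hz₀⟩ := intermediate_value_Ioo hxy hcont.continuousOn
    (show (0 : ℝ) ∈ _ from ⟨sub_neg.2 hx, sub_pos.2 hy⟩)
  exact ⟨z, hz, sub_eq_zero.1 hz₀⟩

end Line

/-- A non-vertical segment in the plane, encoded as the pair of its left and its right endpoint. -/
abbrev Segment := (ℝ × ℝ) × (ℝ × ℝ)

namespace Segment

/-- The line spanned by a segment. -/
def line (e : Segment) : Line := Line.through e.1 e.2

/-- The two endpoints of a segment, as a set of vertices. -/
def endpoints (e : Segment) : Finset (ℝ × ℝ) := {e.1, e.2}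

/-- Two distinct segments cross if they have a common relative interior point. Overlapping
collinear segments count as crossing. -/
def Cross (e f : Segment) : Prop :=
  e ≠ f ∧ ∃ x ∈ Set.Ioo e.1.1 e.2.1 ∩ Set.Ioo f.1.1 f.2.1, e.line.height x = f.line.height x

lemma left_mem_line (e : Segment) : e.1 ∈ e.line := Line.left_mem_through _ _

lemma right_mem_line {e : Segment} (he : e.1.1 < e.2.1) : e.2 ∈ e.line :=
  Line.right_mem_through he.ne

end Segment

/-- A straight-line drawing of a graph with vertex set `V` and edge set `E`, in which no two
vertices have the same abscissa. -/
structure IsDrawing (V : Finset (ℝ × ℝ)) (E : Finset Segment) : Prop where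
  injOn_fst : Set.InjOn Prod.fst (V : Set (ℝ × ℝ))
  left_mem : ∀ e ∈ E, e.1 ∈ V
  right_mem : ∀ e ∈ E, e.2 ∈ V
  left_lt_right : ∀ e ∈ E, e.1.1 < e.2.1

/-- A straight-line drawing without crossings. -/
structure IsPlaneDrawing (V : Finset (ℝ × ℝ)) (E : Finset Segment) : Prop
    extends IsDrawing V E where
  not_cross : ∀ e ∈ E, ∀ f ∈ E, ¬ e.Cross f

/-- The edge `f` comes directly above `e` among the edges of `E` with the same left endpoint. -/
structure IsNextEdge (E : Finset Segment) (e f : Segment) : Prop where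
  mem : f ∈ E
  left_eq : f.1 = e.1
  slope_lt : e.line.slope < f.line.slope
  slope_le : ∀ g ∈ E, g.1 = e.1 → e.line.slope < g.line.slope → f.line.slope ≤ g.line.slope

open scoped Classical in
/-- The edges of maximal slope among those with the same left endpoint. -/
def topEdges (E : Finset Segment) : Finset Segment :=
  {e ∈ E | ∀ f ∈ E, f.1 = e.1 → f.line.slope ≤ e.line.slope}

/-- The closed region between two edges `e` and `f` issuing to the right from the same vertex, with
`e` below `f`, as far as both edges extend; the common left endpoint is removed. -/
def wedge (e f : Segment) : Set (ℝ × ℝ) :=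
  {p | e.1.1 < p.1 ∧ p.1 ≤ e.2.1 ∧ p.1 ≤ f.2.1 ∧
    e.line.height p.1 ≤ p.2 ∧ p.2 ≤ f.line.height p.1}

/-- The vertex `w` is the leftmost vertex in the wedge between `e` and `f`. -/
structure IsFirstVertex (V : Finset (ℝ × ℝ)) (e f : Segment) (w : ℝ × ℝ) : Prop where
  mem : w ∈ V
  mem_wedge : w ∈ wedge e f
  fst_le : ∀ v ∈ V, v ∈ wedge e f → w.1 ≤ v.1

lemma exists_isNextEdge {E : Finset Segment} {e : Segment} (he : e ∈ E) (htop : e ∉ topEdges E) :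
    ∃ f, IsNextEdge E e f := by
  classical
  obtain ⟨g, hg, hleft, hslope⟩ : ∃ g ∈ E, g.1 = e.1 ∧ e.line.slope < g.line.slope := by
    simpa [topEdges, he] using htop
  obtain ⟨f, hf, hmin⟩ := exists_min_image
    {g ∈ E | g.1 = e.1 ∧ e.line.slope < g.line.slope} (fun g => g.line.slope)
    ⟨g, by simp [hg, hleft, hslope]⟩
  simp only [mem_filter] at hf hmin
  exact ⟨f, hf.1, hf.2.1, hf.2.2, fun g hg hleft hslope => hmin g ⟨hg, hleft, hslope⟩⟩

lemma IsNextEdge.height_left {E : Finset Segment} {e f : Segment} (h : IsNextEdge E e f) :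
    e.line.height e.1.1 = f.line.height e.1.1 := by
  rw [← Line.mem_iff.1 e.left_mem_line, ← h.left_eq]
  exact f.left_mem_line

lemma IsNextEdge.height_lt {E : Finset Segment} {e f : Segment} {x : ℝ} (h : IsNextEdge E e f)
    (hx : e.1.1 < x) : e.line.height x < f.line.height x :=
  Line.height_lt_height_of_slope_lt h.slope_lt h.height_left hx

namespace IsPlaneDrawing

variable {V : Finset (ℝ × ℝ)} {E : Finset Segment} {e e' f f' : Segment} {w : ℝ × ℝ}

lemma height_le_of_lt {x y : ℝ} (h : IsPlaneDrawing V E) (he : e ∈ E) (hf : f ∈ E) (hxy : x ≤ y)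
    (hex : e.1.1 ≤ x) (hfx : f.1.1 ≤ x) (hey : y ≤ e.2.1) (hfy : y ≤ f.2.1)
    (hlt : e.line.height x < f.line.height x) : e.line.height y ≤ f.line.height y := by
  by_contra! hgt
  obtain ⟨z, hz, heq⟩ := Line.exists_height_eq hxy hlt hgt
  have hne : e ≠ f := by
    rintro rfl
    exact lt_irrefl _ hlt
  exact h.not_cross e he f hf ⟨hne, z,
    ⟨⟨hex.trans_lt hz.1, hz.2.trans_le hey⟩, ⟨hfx.trans_lt hz.1, hz.2.trans_le hfy⟩⟩, heq⟩

lemma eq_of_left_eq_of_slope_eq (h : IsPlaneDrawing V E) (he : e ∈ E) (hf : f ∈ E)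
    (hleft : e.1 = f.1) (hslope : e.line.slope = f.line.slope) : e = f := by
  by_contra hne
  obtain ⟨x, hx, hx'⟩ := exists_between (lt_min (h.left_lt_right e he)
    (hleft ▸ h.left_lt_right f hf))
  rw [lt_min_iff] at hx'
  have hmem : e.1 ∈ f.line := hleft ▸ f.left_mem_line
  have hline : e.line = f.line := by
    refine Line.ext hslope ?_
    have heq : e.line.height e.1.1 = f.line.height e.1.1 := e.left_mem_line.symm.trans hmem
    simpa [Line.height, hslope] using heq
  exact h.not_cross e he f hf ⟨hne, x, ⟨⟨hx, hx'.1⟩, ⟨hleft ▸ hx, hx'.2⟩⟩, by rw [hline]⟩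

lemma card_topEdges_le (h : IsPlaneDrawing V E) : #(topEdges E) ≤ #V := by
  refine card_le_card_of_injOn Prod.fst
    (fun e he => h.left_mem e (mem_filter.1 he).1) fun e he f hf hleft => ?_
  obtain ⟨heE, hetop⟩ := mem_filter.1 he
  obtain ⟨hfE, hftop⟩ := mem_filter.1 hf
  exact h.eq_of_left_eq_of_slope_eq heE hfE hleft
    (le_antisymm (hftop e heE hleft) (hetop f hfE hleft.symm))

lemma exists_isFirstVertex (h : IsPlaneDrawing V E) (he : e ∈ E) (hnext : IsNextEdge E e f) :
    ∃ w, IsFirstVertex V e f w := by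
  classical
  have heLR := h.left_lt_right e he
  have hfLR := hnext.left_eq ▸ h.left_lt_right f hnext.mem
  have hne : {v ∈ V | v ∈ wedge e f}.Nonempty := by
    rcases le_total e.2.1 f.2.1 with hle | hle
    · refine ⟨e.2, mem_filter.2 ⟨h.right_mem e he, heLR, le_rfl, hle, ?_⟩⟩
      rw [Line.mem_iff.1 (Segment.right_mem_line heLR)]
      exact ⟨le_rfl, (hnext.height_lt heLR).le⟩
    · refine ⟨f.2, mem_filter.2 ⟨h.right_mem f hnext.mem, hfLR, hle, le_rfl, ?_⟩⟩
      rw [Line.mem_iff.1 (Segment.right_mem_line (h.left_lt_right f hnext.mem))]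
      exact ⟨(hnext.height_lt hfLR).le, le_rfl⟩
  obtain ⟨w, hw, hmin⟩ := exists_min_image _ Prod.fst hne
  simp only [mem_filter] at hw hmin
  exact ⟨w, hw.1, hw.2, fun v hv hv' => hmin v ⟨hv, hv'⟩⟩

-- Otherwise the vertex `f.1` is to the left of `w`, and it lies in the wedge above `e`: both `f`
-- and `f'` issue from it, `f'` is above `e` and `f` is below `e'` at the abscissa of `w`, and
-- they may not cross `e` and `e'`.
lemma left_le_of_isFirstVertex (h : IsPlaneDrawing V E) (he : e ∈ E) (hf : f ∈ E)
    (hee' : IsNextEdge E e e') (hff' : IsNextEdge E f f')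
    (hwe : IsFirstVertex V e e' w) (hwf : IsFirstVertex V f f' w)
    (hside : w ∈ e.line ↔ w ∈ f.line) : f.1.1 ≤ e.1.1 := by
  by_contra! hlt
  obtain ⟨hew, hwe₂, hwe'₂, hew_le, hwe'_le⟩ := hwe.mem_wedge
  obtain ⟨hfw, hwf₂, hwf'₂, hfw_le, hwf'_le⟩ := hwf.mem_wedge
  have he_lt_e' := hee'.height_lt hew
  have hf_lt_f' := hff'.height_lt hfw
  have hef' : e.line.height w.1 < f'.line.height w.1 := by
    by_cases hw : w ∈ e.line
    · rwa [← Line.mem_iff.1 hw, Line.mem_iff.1 (hside.1 hw)]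
    · exact (lt_of_le_of_ne hew_le (Ne.symm hw)).trans_le hwf'_le
  have hfe' : f.line.height w.1 < e'.line.height w.1 := by
    by_cases hw : w ∈ f.line
    · rwa [← Line.mem_iff.1 hw, Line.mem_iff.1 (hside.2 hw)]
    · exact (lt_of_le_of_ne hfw_le (Ne.symm hw)).trans_le hwe'_le
  have he'_left : e'.1.1 ≤ f.1.1 := by rw [hee'.left_eq]; exact hlt.le
  have hf'_left : f'.1.1 ≤ f.1.1 := by rw [hff'.left_eq]
  have hf_mem : f.1.2 = f.line.height f.1.1 := f.left_mem_line
  have hmem : f.1 ∈ wedge e e' := by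
    refine ⟨hlt, hfw.le.trans hwe₂, hfw.le.trans hwe'₂, ?_, ?_⟩
    · by_contra! hbelow
      rw [hf_mem, hff'.height_left] at hbelow
      exact hef'.not_ge (h.height_le_of_lt hff'.mem he hfw.le hf'_left hlt.le hwf'₂ hwe₂ hbelow)
    · by_contra! habove
      rw [hf_mem] at habove
      exact hfe'.not_ge (h.height_le_of_lt hee'.mem hf hfw.le he'_left le_rfl hwe'₂ hwf₂ habove)
  exact hfw.not_ge (hwe.fst_le f.1 (h.left_mem f hf) hmem)

end IsPlaneDrawing

-- Distinct wedges at the same vertex meet at most along an edge, which bounds one of them from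
-- above and the other one from below.
lemma slope_le_of_isFirstVertex {V : Finset (ℝ × ℝ)} {E : Finset Segment} {e e' f f' : Segment}
    {w : ℝ × ℝ} (hf : f ∈ E) (hee' : IsNextEdge E e e')
    (hwe : IsFirstVertex V e e' w) (hwf : IsFirstVertex V f f' w)
    (hside : w ∈ e.line ↔ w ∈ f.line) (hleft : e.1 = f.1) : f.line.slope ≤ e.line.slope := by
  by_contra! hlt
  obtain ⟨hew, -, -, -, hwe'_le⟩ := hwe.mem_wedge
  obtain ⟨-, -, -, hfw_le, -⟩ := hwf.mem_wedge
  have hmem : e.1 ∈ f.line := hleft ▸ f.left_mem_line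
  have hheight : e'.line.height w.1 ≤ f.line.height w.1 :=
    Line.height_le_height_of_slope_le (hee'.slope_le f hf hleft.symm hlt)
      (hee'.height_left.symm.trans (e.left_mem_line.symm.trans hmem)) hew.le
  have hwf_line : w ∈ f.line := le_antisymm (hwe'_le.trans hheight) hfw_le
  have hwe_line : w.2 = e.line.height w.1 := hside.2 hwf_line
  have := hee'.height_lt hew
  linarith

namespace IsPlaneDrawing

variable {V : Finset (ℝ × ℝ)} {E : Finset Segment}

-- A vertex comes first in at most one wedge whose lower edge passes through it, and in at most one
-- other wedge.
lemma card_sdiff_topEdges_le (h : IsPlaneDrawing V E) : #(E \ topEdges E) ≤ 2 * #V := by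
  classical
  have hmem : ∀ e ∈ E \ topEdges E, e ∈ E := fun e he => (mem_sdiff.1 he).1
  have hnext : ∀ e ∈ E \ topEdges E, ∃ f, IsNextEdge E e f := fun e he =>
    exists_isNextEdge (hmem e he) (mem_sdiff.1 he).2
  choose! next hnext using hnext
  have hfirst : ∀ e ∈ E \ topEdges E, ∃ w, IsFirstVertex V e (next e) w := fun e he =>
    h.exists_isFirstVertex (hmem e he) (hnext e he)
  choose! first hfirst using hfirst
  calc #(E \ topEdges E) ≤ #(V ×ˢ (univ : Finset Prop)) := by
        refine card_le_card_of_injOn (fun e => (first e, first e ∈ e.line))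
          (fun e he => mem_product.2 ⟨(hfirst e he).mem, mem_univ _⟩) fun e he f hf hef => ?_
        obtain ⟨hw, hside⟩ := Prod.mk.inj hef
        have hwe := hfirst e he
        have hwf := hw ▸ hfirst f hf
        have hside : first e ∈ e.line ↔ first e ∈ f.line := by rw [hside, hw]
        have hleft : e.1 = f.1 :=
          h.injOn_fst (h.left_mem e (hmem e he)) (h.left_mem f (hmem f hf)) <| le_antisymm
            (h.left_le_of_isFirstVertex (hmem f hf) (hmem e he) (hnext f hf) (hnext e he)
              hwf hwe hside.symm)
            (h.left_le_of_isFirstVertex (hmem e he) (hmem f hf) (hnext e he) (hnext f hf)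
              hwe hwf hside)
        exact h.eq_of_left_eq_of_slope_eq (hmem e he) (hmem f hf) hleft <| le_antisymm
          (slope_le_of_isFirstVertex (hmem e he) (hnext f hf) hwf hwe hside.symm hleft.symm)
          (slope_le_of_isFirstVertex (hmem f hf) (hnext e he) hwe hwf hside hleft)
    _ = 2 * #V := by rw [card_product, card_univ, Fintype.card_prop, mul_comm]

lemma card_le (h : IsPlaneDrawing V E) : #E ≤ 3 * #V := by
  classical
  have htop := h.card_topEdges_le
  have hrest := h.card_sdiff_topEdges_le
  have hsplit := card_le_card_sdiff_add_card (s := E) (t := topEdges E)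
  lia

end IsPlaneDrawing

/-! ### The crossing lemma -/

open scoped Classical in
/-- The ordered pairs of crossing segments in `E`. -/
def crossings (E : Finset Segment) : Finset (Segment × Segment) :=
  {z ∈ E ×ˢ E | z.1.Cross z.2}

/-- The probability that a random subset of `V`, containing each element independently with
probability `p`, equals `S`. -/
def bernoulliWeight {α : Type*} [DecidableEq α] (p : ℝ) (V S : Finset α) : ℝ :=
  p ^ #S * (1 - p) ^ #(V \ S)

section BernoulliWeight

variable {α β : Type*} [DecidableEq α] {V : Finset α} {p : ℝ}

lemma bernoulliWeight_nonneg (hp : p ∈ Set.Icc 0 1) (S : Finset α) :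
    0 ≤ bernoulliWeight p V S :=
  mul_nonneg (pow_nonneg hp.1 _) (pow_nonneg (sub_nonneg.2 hp.2) _)

lemma sum_bernoulliWeight_superset {A : Finset α} (hA : A ⊆ V) (p : ℝ) :
    ∑ S ∈ V.powerset with A ⊆ S, bernoulliWeight p V S = p ^ #A := by
  have hterm : ∀ S ∈ V.powerset, (if A ⊆ S then bernoulliWeight p V S else 0) =
      (∏ _i ∈ S, p) * ∏ i ∈ V \ S, if i ∈ A then 0 else 1 - p := by
    intro S _
    split_ifs with hAS
    · rw [prod_const, prod_congr rfl fun i hi => if_neg fun hiA => (mem_sdiff.1 hi).2 (hAS hiA),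
        prod_const, bernoulliWeight]
    · obtain ⟨i, hiA, hiS⟩ := not_subset.1 hAS
      have hzero : ∏ i ∈ V \ S, (if i ∈ A then 0 else 1 - p) = 0 :=
        prod_eq_zero (mem_sdiff.2 ⟨hA hiA, hiS⟩) (if_pos hiA)
      rw [hzero, mul_zero]
  calc ∑ S ∈ V.powerset with A ⊆ S, bernoulliWeight p V S
      = ∏ i ∈ V, (p + if i ∈ A then 0 else 1 - p) := by
        rw [sum_filter, sum_congr rfl hterm, prod_add]
    _ = ∏ i ∈ V, if i ∈ A then p else 1 := by
        refine prod_congr rfl fun i _ => ?_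
        split_ifs <;> ring
    _ = p ^ #A := by
        rw [prod_ite_mem, prod_const, inter_eq_right.2 hA]

lemma sum_bernoulliWeight_mul_card {T : Finset β} {A : β → Finset α} {k : ℕ}
    (hA : ∀ z ∈ T, A z ⊆ V) (hk : ∀ z ∈ T, #(A z) = k) (p : ℝ) :
    ∑ S ∈ V.powerset, bernoulliWeight p V S * #{z ∈ T | A z ⊆ S} = p ^ k * #T := by
  calc ∑ S ∈ V.powerset, bernoulliWeight p V S * #{z ∈ T | A z ⊆ S}
      = ∑ S ∈ V.powerset, ∑ z ∈ T, if A z ⊆ S then bernoulliWeight p V S else 0 := by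
        refine sum_congr rfl fun S _ => ?_
        rw [← sum_filter, sum_const, nsmul_eq_mul, mul_comm]
    _ = ∑ _z ∈ T, p ^ k := by
        rw [sum_comm]
        refine sum_congr rfl fun z hz => ?_
        rw [← sum_filter, sum_bernoulliWeight_superset (hA z hz), hk z hz]
    _ = p ^ k * #T := by rw [sum_const, nsmul_eq_mul, mul_comm]

end BernoulliWeight

namespace IsDrawing

variable {V : Finset (ℝ × ℝ)} {E : Finset Segment}

lemma endpoints_subset (h : IsDrawing V E) {e : Segment} (he : e ∈ E) : e.endpoints ⊆ V :=
  insert_subset (h.left_mem e he) (singleton_subset_iff.2 (h.right_mem e he))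

lemma mono {S : Finset (ℝ × ℝ)} {F : Finset Segment} (h : IsDrawing V E) (hS : S ⊆ V)
    (hF : F ⊆ E) (hFS : ∀ e ∈ F, e.endpoints ⊆ S) : IsDrawing S F where
  injOn_fst := h.injOn_fst.mono (coe_subset.2 hS)
  left_mem e he := hFS e he (by simp [Segment.endpoints])
  right_mem e he := hFS e he (by simp [Segment.endpoints])
  left_lt_right e he := h.left_lt_right e (hF he)

lemma card_endpoints (h : IsDrawing V E) {e : Segment} (he : e ∈ E) : #e.endpoints = 2 :=
  card_pair fun heq => (h.left_lt_right e he).ne (congrArg Prod.fst heq)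

lemma card_le_add_card_crossings (h : IsDrawing V E) : #E ≤ 3 * #V + #(crossings E) := by
  classical
  have hplane : IsPlaneDrawing V (E \ (crossings E).image Prod.fst) :=
    { h.mono subset_rfl sdiff_subset fun e he => h.endpoints_subset (mem_sdiff.1 he).1 with
      not_cross := fun e he f hf hcross => (mem_sdiff.1 he).2 <| mem_image.2 ⟨(e, f),
        mem_filter.2 ⟨mem_product.2 ⟨(mem_sdiff.1 he).1, (mem_sdiff.1 hf).1⟩, hcross⟩, rfl⟩ }
  calc #E ≤ #(E \ (crossings E).image Prod.fst) + #((crossings E).image Prod.fst) :=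
        card_le_card_sdiff_add_card
    _ ≤ 3 * #V + #(crossings E) := add_le_add hplane.card_le card_image_le

lemma card_induced_le (h : IsDrawing V E) {S : Finset (ℝ × ℝ)} (hS : S ⊆ V) :
    #{e ∈ E | e.endpoints ⊆ S} ≤
      3 * #S + #{z ∈ crossings E | z.1.endpoints ∪ z.2.endpoints ⊆ S} := by
  classical
  have hinduced : IsDrawing S {e ∈ E | e.endpoints ⊆ S} :=
    h.mono hS (filter_subset _ _) fun e he => (mem_filter.1 he).2
  refine hinduced.card_le_add_card_crossings.trans (Nat.add_le_add_left (card_le_card ?_) _)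
  intro z hz
  simp only [crossings, mem_filter, mem_product, union_subset_iff] at hz ⊢
  tauto

-- The crossing lemma, by taking expectations over a random set of vertices in the bound
-- `edges ≤ 3 * vertices + crossings` for the induced drawing.
lemma sq_mul_card_le (h : IsDrawing V E)
    (hdisj : ∀ e ∈ E, ∀ f ∈ E, e.Cross f → Disjoint e.endpoints f.endpoints) {p : ℝ}
    (hp : p ∈ Set.Icc 0 1) :
    p ^ 2 * #E ≤ 3 * p * #V + p ^ 4 * #(crossings E) := by
  have hcross : ∀ z ∈ crossings E, (z.1 ∈ E ∧ z.2 ∈ E) ∧ z.1.Cross z.2 := fun z hz => by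
    simpa [crossings] using hz
  have hedges : ∑ S ∈ V.powerset, bernoulliWeight p V S * #{e ∈ E | e.endpoints ⊆ S} =
      p ^ 2 * #E :=
    sum_bernoulliWeight_mul_card (fun e he => h.endpoints_subset he)
      (fun e he => h.card_endpoints he) p
  have hvertices : ∑ S ∈ V.powerset, bernoulliWeight p V S * #S = p * #V := by
    have hsingle := sum_bernoulliWeight_mul_card (fun v hv => singleton_subset_iff.2 hv)
      (fun v (_ : v ∈ V) => card_singleton v) p
    rw [← pow_one p, ← hsingle, pow_one]
    refine sum_congr rfl fun S hS => ?_
    simp only [singleton_subset_iff]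
    rw [filter_mem_eq_inter, inter_eq_right.2 (mem_powerset.1 hS)]
  have hcrossings : ∑ S ∈ V.powerset, bernoulliWeight p V S *
      #{z ∈ crossings E | z.1.endpoints ∪ z.2.endpoints ⊆ S} = p ^ 4 * #(crossings E) := by
    refine sum_bernoulliWeight_mul_card (fun z hz => ?_) (fun z hz => ?_) p <;>
      obtain ⟨⟨hz₁, hz₂⟩, hz⟩ := hcross z hz
    · exact union_subset (h.endpoints_subset hz₁) (h.endpoints_subset hz₂)
    · rw [card_union_of_disjoint (hdisj _ hz₁ _ hz₂ hz), h.card_endpoints hz₁,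
        h.card_endpoints hz₂]
  calc p ^ 2 * #E
      = ∑ S ∈ V.powerset, bernoulliWeight p V S * #{e ∈ E | e.endpoints ⊆ S} := hedges.symm
    _ ≤ ∑ S ∈ V.powerset, bernoulliWeight p V S *
          (3 * #S + #{z ∈ crossings E | z.1.endpoints ∪ z.2.endpoints ⊆ S}) := by
        refine sum_le_sum fun S hS =>
          mul_le_mul_of_nonneg_left ?_ (bernoulliWeight_nonneg hp S)
        exact_mod_cast h.card_induced_le (mem_powerset.1 hS)
    _ = 3 * (p * #V) + p ^ 4 * #(crossings E) := by
        simp only [mul_add, sum_add_distrib, mul_left_comm _ (3 : ℝ), ← mul_sum, hvertices,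
          hcrossings]
    _ = 3 * p * #V + p ^ 4 * #(crossings E) := by rw [mul_assoc]

end IsDrawing

/-! ### Rich lines -/

open scoped Classical in
/-- The points of `P` on the line `l`. -/
def pointsOn (P : Finset (ℝ × ℝ)) (l : Line) : Finset (ℝ × ℝ) := {p ∈ P | p ∈ l}

lemma mem_pointsOn {P : Finset (ℝ × ℝ)} {l : Line} {p : ℝ × ℝ} :
    p ∈ pointsOn P l ↔ p ∈ P ∧ p ∈ l := by
  simp [pointsOn]

open scoped Classical in
/-- The segments between consecutive points of `P` on a line of `L`. -/
def consecutiveSegments (P : Finset (ℝ × ℝ)) (L : Finset Line) : Finset Segment :=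
  {e ∈ P ×ˢ P | e.1.1 < e.2.1 ∧ e.line ∈ L ∧ ∀ q ∈ P, q ∈ e.line → q.1 ∉ Set.Ioo e.1.1 e.2.1}

section ConsecutiveSegments

variable {P : Finset (ℝ × ℝ)} {L : Finset Line} {e f : Segment} {x : ℝ}

lemma mem_consecutiveSegments : e ∈ consecutiveSegments P L ↔ (e.1 ∈ P ∧ e.2 ∈ P) ∧
    e.1.1 < e.2.1 ∧ e.line ∈ L ∧ ∀ q ∈ P, q ∈ e.line → q.1 ∉ Set.Ioo e.1.1 e.2.1 := by
  simp only [consecutiveSegments, mem_filter, mem_product]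

lemma isDrawing_consecutiveSegments (hP : Set.InjOn Prod.fst (P : Set (ℝ × ℝ)))
    (L : Finset Line) : IsDrawing P (consecutiveSegments P L) where
  injOn_fst := hP
  left_mem _ he := (mem_consecutiveSegments.1 he).1.1
  right_mem _ he := (mem_consecutiveSegments.1 he).1.2
  left_lt_right _ he := (mem_consecutiveSegments.1 he).2.1

lemma mem_line_and_notMem_Ioo_of_mem_endpoints (he : e ∈ consecutiveSegments P L) {v : ℝ × ℝ}
    (hv : v ∈ e.endpoints) : v ∈ e.line ∧ v.1 ∉ Set.Ioo e.1.1 e.2.1 := by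
  obtain rfl | rfl : v = e.1 ∨ v = e.2 := by simpa [Segment.endpoints] using hv
  · exact ⟨e.left_mem_line, fun h => lt_irrefl _ h.1⟩
  · exact ⟨Segment.right_mem_line (mem_consecutiveSegments.1 he).2.1, fun h => lt_irrefl _ h.2⟩

lemma eq_of_line_eq_of_mem_Ioo (hP : Set.InjOn Prod.fst (P : Set (ℝ × ℝ)))
    (he : e ∈ consecutiveSegments P L) (hf : f ∈ consecutiveSegments P L) (hline : e.line = f.line)
    (hxe : x ∈ Set.Ioo e.1.1 e.2.1) (hxf : x ∈ Set.Ioo f.1.1 f.2.1) : e = f := by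
  have key : ∀ {e f : Segment}, e ∈ consecutiveSegments P L → f ∈ consecutiveSegments P L →
      e.line = f.line → x ∈ Set.Ioo e.1.1 e.2.1 → x ∈ Set.Ioo f.1.1 f.2.1 →
      f.1.1 ≤ e.1.1 ∧ e.2.1 ≤ f.2.1 := by
    intro e f he hf hline hxe hxf
    obtain ⟨-, -, -, hgap⟩ := mem_consecutiveSegments.1 he
    obtain ⟨⟨hf₁, hf₂⟩, hf_lt, -, -⟩ := mem_consecutiveSegments.1 hf
    constructor <;> by_contra! hlt
    · exact hgap f.1 hf₁ (hline ▸ f.left_mem_line) ⟨hlt, hxf.1.trans hxe.2⟩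
    · exact hgap f.2 hf₂ (hline ▸ Segment.right_mem_line hf_lt) ⟨hxe.1.trans hxf.2, hlt⟩
  obtain ⟨⟨he₁, he₂⟩, -⟩ := mem_consecutiveSegments.1 he
  obtain ⟨⟨hf₁, hf₂⟩, -⟩ := mem_consecutiveSegments.1 hf
  obtain ⟨hfe₁, hef₂⟩ := key he hf hline hxe hxf
  obtain ⟨hef₁, hfe₂⟩ := key hf he hline.symm hxf hxe
  exact Prod.ext (hP he₁ hf₁ (le_antisymm hef₁ hfe₁)) (hP he₂ hf₂ (le_antisymm hef₂ hfe₂))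

lemma line_ne_of_cross (hP : Set.InjOn Prod.fst (P : Set (ℝ × ℝ)))
    (he : e ∈ consecutiveSegments P L) (hf : f ∈ consecutiveSegments P L) (h : e.Cross f) :
    e.line ≠ f.line := by
  obtain ⟨hne, x, ⟨hxe, hxf⟩, -⟩ := h
  exact fun hline => hne (eq_of_line_eq_of_mem_Ioo hP he hf hline hxe hxf)

lemma disjoint_endpoints_of_cross (hP : Set.InjOn Prod.fst (P : Set (ℝ × ℝ)))
    (he : e ∈ consecutiveSegments P L) (hf : f ∈ consecutiveSegments P L) (h : e.Cross f) :
    Disjoint e.endpoints f.endpoints := by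
  refine disjoint_left.2 fun v hve hvf => line_ne_of_cross hP he hf h ?_
  obtain ⟨-, x, ⟨hxe, -⟩, hx⟩ := h
  obtain ⟨hve, hve'⟩ := mem_line_and_notMem_Ioo_of_mem_endpoints he hve
  obtain ⟨hvf, -⟩ := mem_line_and_notMem_Ioo_of_mem_endpoints hf hvf
  have hxv : x ≠ v.1 := fun hxv => hve' (hxv ▸ hxe)
  exact Line.eq_of_height_eq hxv hx (hve.symm.trans hvf)

lemma card_crossings_consecutiveSegments_le (hP : Set.InjOn Prod.fst (P : Set (ℝ × ℝ)))
    (L : Finset Line) : #(crossings (consecutiveSegments P L)) ≤ #L ^ 2 := by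
  have hmem : ∀ z ∈ crossings (consecutiveSegments P L), (z.1 ∈ consecutiveSegments P L ∧
      z.2 ∈ consecutiveSegments P L) ∧ z.1.Cross z.2 := fun z hz => by simpa [crossings] using hz
  rw [sq, ← card_product]
  refine card_le_card_of_injOn (fun z => (z.1.line, z.2.line)) (fun z hz => ?_)
    fun y hy z hz hyz => ?_
  · obtain ⟨⟨hz₁, hz₂⟩, -⟩ := hmem z hz
    exact mem_product.2 ⟨(mem_consecutiveSegments.1 hz₁).2.2.1,
      (mem_consecutiveSegments.1 hz₂).2.2.1⟩
  · obtain ⟨⟨hy₁, hy₂⟩, hcross⟩ := hmem y hy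
    obtain ⟨⟨hz₁, hz₂⟩, -, x', ⟨hx'₁, hx'₂⟩, hx'⟩ := hmem z hz
    have hne := line_ne_of_cross hP hy₁ hy₂ hcross
    obtain ⟨-, x, ⟨hx₁, hx₂⟩, hx⟩ := hcross
    obtain ⟨hline₁, hline₂⟩ := Prod.mk.inj hyz
    obtain rfl : x = x' := by
      by_contra hxx'
      exact hne (Line.eq_of_height_eq hxx' hx (by rwa [hline₁, hline₂]))
    exact Prod.ext (eq_of_line_eq_of_mem_Ioo hP hy₁ hz₁ hline₁ hx₁ hx'₁)
      (eq_of_line_eq_of_mem_Ioo hP hy₂ hz₂ hline₂ hx₂ hx'₂)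

open scoped Classical in
lemma card_pointsOn_le (hP : Set.InjOn Prod.fst (P : Set (ℝ × ℝ))) {l : Line} (hl : l ∈ L) :
    #(pointsOn P l) ≤ #{e ∈ consecutiveSegments P L | e.line = l} + 1 := by
  rcases (pointsOn P l).eq_empty_or_nonempty with hempty | hne
  · simp [hempty]
  obtain ⟨last, hlast, hmax⟩ := exists_max_image _ Prod.fst hne
  have hcover : pointsOn P l ⊆
      insert last ({e ∈ consecutiveSegments P L | e.line = l}.image Prod.fst) := by
    intro p hp
    rw [mem_insert, mem_image]
    refine or_iff_not_imp_left.2 fun hp_ne => ?_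
    obtain ⟨hpP, hpl⟩ := mem_pointsOn.1 hp
    have hp_lt : p.1 < last.1 := lt_of_le_of_ne (hmax p hp) fun heq =>
      hp_ne (hP hpP (mem_pointsOn.1 hlast).1 heq)
    obtain ⟨q, hq, hmin⟩ := exists_min_image {q ∈ pointsOn P l | p.1 < q.1} Prod.fst
      ⟨last, mem_filter.2 ⟨hlast, hp_lt⟩⟩
    obtain ⟨hq, hpq⟩ := mem_filter.1 hq
    obtain ⟨hqP, hql⟩ := mem_pointsOn.1 hq
    have hline : Segment.line (p, q) = l := Line.through_eq hpq.ne hpl hql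
    refine ⟨(p, q), mem_filter.2 ⟨mem_consecutiveSegments.2
      ⟨⟨hpP, hqP⟩, hpq, hline ▸ hl, fun r hr hrl hpr => ?_⟩, hline⟩, rfl⟩
    exact hpr.2.not_ge
      (hmin r (mem_filter.2 ⟨mem_pointsOn.2 ⟨hr, hline ▸ hrl⟩, hpr.1⟩))
  calc #(pointsOn P l) ≤ _ := card_le_card hcover
    _ ≤ _ := card_insert_le _ _
    _ ≤ _ := Nat.add_le_add_right card_image_le 1

lemma sum_card_pointsOn_le (hP : Set.InjOn Prod.fst (P : Set (ℝ × ℝ))) (L : Finset Line) :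
    ∑ l ∈ L, #(pointsOn P l) ≤ #(consecutiveSegments P L) + #L := by
  classical
  calc ∑ l ∈ L, #(pointsOn P l)
      ≤ ∑ l ∈ L, (#{e ∈ consecutiveSegments P L | e.line = l} + 1) :=
        sum_le_sum fun l hl => card_pointsOn_le hP hl
    _ = #(consecutiveSegments P L) + #L := by
        rw [sum_add_distrib, sum_const, smul_eq_mul, mul_one,
          ← card_eq_sum_card_fiberwise fun e he => (mem_consecutiveSegments.1 he).2.2.1]

end ConsecutiveSegments

lemma pow_three_mul_le_or_mul_le {k m n : ℝ} (hk : 0 ≤ k) (hm : 0 ≤ m)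
    (h : ∀ p ∈ Set.Icc (0 : ℝ) 1, p * (k * m) ≤ 6 * n + 2 * p ^ 3 * m ^ 2) :
    k ^ 3 * m ≤ 576 * n ^ 2 ∨ k * m ≤ 12 * n := by
  rcases hm.eq_or_lt with rfl | hm
  · left
    rw [mul_zero]
    positivity
  rcases le_total k (4 * m) with hkm | hkm
  · left
    -- this choice of `p` makes the second term on the right half of the left-hand side
    set p := √(k / (4 * m))
    have hp : 4 * m * p ^ 2 = k := by
      rw [Real.sq_sqrt (by positivity)]
      field_simp
    have hp_mem : p ∈ Set.Icc 0 1 :=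
      ⟨Real.sqrt_nonneg _, Real.sqrt_le_one.2 (by rw [div_le_one (by positivity)]; exact hkm)⟩
    have hp_le : p * (k * m) ≤ 12 * n := by
      have := h p hp_mem
      have : 2 * p ^ 3 * m ^ 2 = p * (k * m) / 2 := by rw [← hp]; ring
      linarith
    have hp_nonneg : 0 ≤ p * (k * m) := mul_nonneg hp_mem.1 (by positivity)
    calc k ^ 3 * m = 4 * (p * (k * m)) ^ 2 := by
          linear_combination (-(k ^ 2 * m)) * hp
      _ ≤ 4 * (12 * n) ^ 2 :=
          mul_le_mul_of_nonneg_left (pow_le_pow_left₀ hp_nonneg hp_le 2) (by norm_num)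
      _ = 576 * n ^ 2 := by ring
  · right
    have := h 1 ⟨zero_le_one, le_rfl⟩
    nlinarith

section RichLines

variable {P : Finset (ℝ × ℝ)} {L : Finset Line}

lemma sq_mul_sum_card_pointsOn_le (hP : Set.InjOn Prod.fst (P : Set (ℝ × ℝ))) (L : Finset Line)
    {p : ℝ} (hp : p ∈ Set.Icc 0 1) :
    p ^ 2 * ∑ l ∈ L, (#(pointsOn P l) : ℝ) ≤ p ^ 2 * #L + 3 * p * #P + p ^ 4 * #L ^ 2 := by
  have hincidences : ∑ l ∈ L, (#(pointsOn P l) : ℝ) ≤ #(consecutiveSegments P L) + #L :=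
    mod_cast sum_card_pointsOn_le hP L
  have hedges := (isDrawing_consecutiveSegments hP L).sq_mul_card_le
    (fun e he f hf => disjoint_endpoints_of_cross hP he hf) hp
  have hcrossings : (#(crossings (consecutiveSegments P L)) : ℝ) ≤ #L ^ 2 :=
    mod_cast card_crossings_consecutiveSegments_le hP L
  calc p ^ 2 * ∑ l ∈ L, (#(pointsOn P l) : ℝ)
      ≤ p ^ 2 * (#(consecutiveSegments P L) + #L) := by gcongr
    _ = p ^ 2 * #L + p ^ 2 * #(consecutiveSegments P L) := by ring
    _ ≤ p ^ 2 * #L + (3 * p * #P + p ^ 4 * #(crossings (consecutiveSegments P L))) := by gcongr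
    _ ≤ p ^ 2 * #L + 3 * p * #P + p ^ 4 * #L ^ 2 := by rw [← add_assoc]; gcongr

lemma mul_sum_card_pointsOn_le (hP : Set.InjOn Prod.fst (P : Set (ℝ × ℝ)))
    (hL : ∀ l ∈ L, 2 ≤ #(pointsOn P l)) {p : ℝ} (hp : p ∈ Set.Icc 0 1) :
    p * ∑ l ∈ L, (#(pointsOn P l) : ℝ) ≤ 6 * #P + 2 * p ^ 3 * #L ^ 2 := by
  have htwo : 2 * (#L : ℝ) ≤ ∑ l ∈ L, (#(pointsOn P l) : ℝ) := by
    rw [mul_comm, ← nsmul_eq_mul]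
    exact card_nsmul_le_sum _ _ _ fun l hl => mod_cast hL l hl
  rcases hp.1.eq_or_lt with rfl | hp_pos
  · simp
  · refine le_of_mul_le_mul_left ?_ hp_pos
    have := sq_mul_sum_card_pointsOn_le hP L hp
    have := mul_le_mul_of_nonneg_left htwo (sq_nonneg p)
    linarith

lemma pow_three_mul_card_lines_le_or_mul_card_lines_le (hP : Set.InjOn Prod.fst (P : Set (ℝ × ℝ)))
    (hL : ∀ l ∈ L, 2 ≤ #(pointsOn P l)) {k : ℕ} (hk : ∀ l ∈ L, k ≤ #(pointsOn P l)) :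
    (k : ℝ) ^ 3 * #L ≤ 576 * #P ^ 2 ∨ (k : ℝ) * #L ≤ 12 * #P := by
  refine pow_three_mul_le_or_mul_le k.cast_nonneg (#L).cast_nonneg fun p hp => ?_
  refine le_trans (mul_le_mul_of_nonneg_left ?_ hp.1) (mul_sum_card_pointsOn_le hP hL hp)
  rw [mul_comm, ← nsmul_eq_mul]
  exact card_nsmul_le_sum _ _ _ fun l hl => mod_cast hk l hl

lemma pow_three_mul_card_lines_le (hP : Set.InjOn Prod.fst (P : Set (ℝ × ℝ)))
    (hL : ∀ l ∈ L, 2 ≤ #(pointsOn P l)) {k : ℕ} (hk : ∀ l ∈ L, k ≤ #(pointsOn P l))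
    (hkP : k ^ 2 ≤ #P) : (k : ℝ) ^ 3 * #L ≤ 576 * #P ^ 2 := by
  refine (pow_three_mul_card_lines_le_or_mul_card_lines_le hP hL hk).elim id fun h => ?_
  have hkP : (k : ℝ) ^ 2 ≤ #P := mod_cast hkP
  calc (k : ℝ) ^ 3 * #L = (k : ℝ) ^ 2 * (k * (#L : ℝ)) := by ring
    _ ≤ (#P : ℝ) * (12 * (#P : ℝ)) := by gcongr
    _ ≤ 576 * (#P : ℝ) ^ 2 := by nlinarith [sq_nonneg (#P : ℝ)]

lemma mul_card_lines_le (hP : Set.InjOn Prod.fst (P : Set (ℝ × ℝ)))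
    (hL : ∀ l ∈ L, 2 ≤ #(pointsOn P l)) {k : ℕ} (hk : ∀ l ∈ L, k ≤ #(pointsOn P l))
    (hkP : #P < k ^ 2) : (k : ℝ) * #L ≤ 576 * #P := by
  have hk_pos : (0 : ℝ) < k ^ 2 := mod_cast Nat.zero_lt_of_lt hkP
  have hkP : (#P : ℝ) ≤ k ^ 2 := mod_cast hkP.le
  rcases pow_three_mul_card_lines_le_or_mul_card_lines_le hP hL hk with h | h
  · refine le_of_mul_le_mul_left ?_ hk_pos
    calc (k : ℝ) ^ 2 * (k * (#L : ℝ)) = (k : ℝ) ^ 3 * (#L : ℝ) := by ring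
      _ ≤ 576 * (#P : ℝ) ^ 2 := h
      _ = (#P : ℝ) * (576 * (#P : ℝ)) := by ring
      _ ≤ (k : ℝ) ^ 2 * (576 * (#P : ℝ)) := by gcongr
  · linarith [(#P).cast_nonneg (α := ℝ)]

lemma pow_three_le_sum_Icc (n : ℕ) : n ^ 3 ≤ ∑ k ∈ Icc 1 n, 3 * k ^ 2 := by
  induction n with
  | zero => simp
  | succ n ih =>
    rw [sum_Icc_succ_top (by lia)]
    have : (n + 1) ^ 3 + (3 * n + 2) = n ^ 3 + 3 * (n + 1) ^ 2 := by ring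
    lia

lemma sum_card_pointsOn_pow_three_le_sum_Icc (P : Finset (ℝ × ℝ)) (L : Finset Line) :
    ∑ l ∈ L, #(pointsOn P l) ^ 3 ≤
      ∑ k ∈ Icc 1 #P, 3 * k ^ 2 * #{l ∈ L | k ≤ #(pointsOn P l)} := by
  calc ∑ l ∈ L, #(pointsOn P l) ^ 3
      ≤ ∑ l ∈ L, ∑ k ∈ Icc 1 #P, if k ≤ #(pointsOn P l) then 3 * k ^ 2 else 0 := by
        refine sum_le_sum fun l _ => (pow_three_le_sum_Icc _).trans ?_
        rw [← sum_filter]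
        refine sum_le_sum_of_subset fun k hk => ?_
        have hle : #(pointsOn P l) ≤ #P := card_le_card fun p hp => (mem_pointsOn.1 hp).1
        simp only [mem_Icc, mem_filter] at *
        lia
    _ = ∑ k ∈ Icc 1 #P, 3 * k ^ 2 * #{l ∈ L | k ≤ #(pointsOn P l)} := by
        rw [sum_comm]
        refine sum_congr rfl fun k _ => ?_
        rw [← sum_filter, sum_const, smul_eq_mul, mul_comm]

lemma sum_card_pointsOn_pow_three_le (hP : Set.InjOn Prod.fst (P : Set (ℝ × ℝ)))
    (hL : ∀ l ∈ L, 2 ≤ #(pointsOn P l)) (hpoor : ∀ l ∈ L, #(pointsOn P l) ^ 2 ≤ #P) :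
    ∑ l ∈ L, (#(pointsOn P l) : ℝ) ^ 3 ≤ 1728 * #P ^ 2 * (1 + log #P) := by
  have hlevel : ∀ k ∈ Icc 1 #P, 3 * (k : ℝ) ^ 2 * #{l ∈ L | k ≤ #(pointsOn P l)} ≤
      1728 * #P ^ 2 * (k : ℝ)⁻¹ := by
    intro k hk
    have hk_pos : (0 : ℝ) < k := mod_cast (mem_Icc.1 hk).1
    rcases {l ∈ L | k ≤ #(pointsOn P l)}.eq_empty_or_nonempty with hempty | ⟨l, hl⟩
    · rw [hempty, card_empty, Nat.cast_zero, mul_zero]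
      positivity
    obtain ⟨hl, hkl⟩ := mem_filter.1 hl
    have hcube := pow_three_mul_card_lines_le hP (fun l hl => hL l (mem_filter.1 hl).1)
      (fun l hl => (mem_filter.1 hl).2) ((Nat.pow_le_pow_left hkl 2).trans (hpoor l hl))
    rw [← div_eq_mul_inv, le_div_iff₀ hk_pos]
    linarith
  have hharmonic : ∑ k ∈ Icc 1 #P, (k : ℝ)⁻¹ ≤ 1 + log #P := by
    simpa [harmonic_eq_sum_Icc] using harmonic_le_one_add_log #P
  calc ∑ l ∈ L, (#(pointsOn P l) : ℝ) ^ 3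
      ≤ ∑ k ∈ Icc 1 #P, 3 * (k : ℝ) ^ 2 * #{l ∈ L | k ≤ #(pointsOn P l)} :=
        mod_cast sum_card_pointsOn_pow_three_le_sum_Icc P L
    _ ≤ ∑ k ∈ Icc 1 #P, 1728 * #P ^ 2 * (k : ℝ)⁻¹ := sum_le_sum hlevel
    _ ≤ 1728 * #P ^ 2 * (1 + log #P) := by rw [← mul_sum]; gcongr

lemma sum_card_pointsOn_le_mul_card (hP : Set.InjOn Prod.fst (P : Set (ℝ × ℝ)))
    (hL : ∀ l ∈ L, 2 ≤ #(pointsOn P l)) (hrich : ∀ l ∈ L, #P < #(pointsOn P l) ^ 2) :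
    ∑ l ∈ L, (#(pointsOn P l) : ℝ) ≤ (2 * 576 ^ 2 + 6) * #P := by
  set k := Nat.sqrt #P + 1
  have hkP : #P < k ^ 2 := Nat.lt_succ_sqrt' _
  have hk_mul := mul_card_lines_le hP hL (fun l hl => Nat.sqrt_lt'.2 (hrich l hl)) hkP
  have hk_pos : (0 : ℝ) < k ^ 2 := by positivity
  have hkP : (#P : ℝ) ≤ k ^ 2 := mod_cast hkP.le
  have hcard_sq : (#L : ℝ) ^ 2 ≤ 576 ^ 2 * #P := by
    refine le_of_mul_le_mul_left ?_ hk_pos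
    calc (k : ℝ) ^ 2 * (#L : ℝ) ^ 2 = (k * (#L : ℝ)) ^ 2 := by ring
      _ ≤ (576 * (#P : ℝ)) ^ 2 := by gcongr
      _ = (#P : ℝ) * (576 ^ 2 * (#P : ℝ)) := by ring
      _ ≤ (k : ℝ) ^ 2 * (576 ^ 2 * (#P : ℝ)) := by gcongr
  have := mul_sum_card_pointsOn_le hP hL (p := 1) ⟨zero_le_one, le_rfl⟩
  linarith

end RichLines

/-! ### Right angles -/

/-- The vectors from `a` to `c` and from `a` to `d` are orthogonal. The degenerate cases `c = a` and
`d = a` are allowed. -/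
def IsRightAngle (a c d : ℝ × ℝ) : Prop :=
  (c.1 - a.1) * (d.1 - a.1) + (c.2 - a.2) * (d.2 - a.2) = 0

namespace IsRightAngle

variable {a b c c' d d' : ℝ × ℝ} {l : Line}

lemma symm (h : IsRightAngle a c d) : IsRightAngle a d c := by
  unfold IsRightAngle at *
  linear_combination h

lemma add_slope_mul_eq_zero (h : IsRightAngle a c d) (hac : a.1 ≠ c.1) (ha : a ∈ l) (hc : c ∈ l) :
    (d.1 - a.1) + l.slope * (d.2 - a.2) = 0 := by
  simp only [IsRightAngle, Line.mem_iff, Line.height] at *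
  refine (mul_eq_zero.1 ?_).resolve_left (sub_ne_zero.2 hac.symm)
  linear_combination h - (d.2 - a.2) * (hc - ha)

lemma foot_unique (h : IsRightAngle a c d) (h' : IsRightAngle b c' d) (hac : a.1 ≠ c.1)
    (hbc' : b.1 ≠ c'.1) (ha : a ∈ l) (hb : b ∈ l) (hc : c ∈ l) (hc' : c' ∈ l) : a = b := by
  have hperp := h.add_slope_mul_eq_zero hac ha hc
  have hperp' := h'.add_slope_mul_eq_zero hbc' hb hc'
  simp only [Line.mem_iff, Line.height] at ha hb
  have hfst : a.1 = b.1 := by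
    refine mul_left_cancel₀ (by positivity : 1 + l.slope ^ 2 ≠ 0) ?_
    linear_combination hperp' - hperp + l.slope * (hb - ha)
  exact Prod.ext hfst (by rw [ha, hb, hfst])

lemma mem_through (h : IsRightAngle a c d) (h' : IsRightAngle a c d') (hac : a.1 ≠ c.1)
    (had : a.1 ≠ d.1) : d' ∈ Line.through a d := by
  have had₀ : d.1 - a.1 ≠ 0 := sub_ne_zero.2 had.symm
  have hdet : (d'.2 - a.2) * (d.1 - a.1) = (d.2 - a.2) * (d'.1 - a.1) := by
    unfold IsRightAngle at h h'
    refine mul_left_cancel₀ (sub_ne_zero.2 hac.symm) ?_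
    linear_combination (d'.2 - a.2) * h - (d.2 - a.2) * h'
  simp only [Line.mem_iff, Line.height, Line.through]
  field_simp
  linear_combination hdet

end IsRightAngle

open scoped Classical in
/-- The triples `(a, c, d)` of points of `P` with a right angle at `a`, degenerate ones included. -/
def rightAngles (P : Finset (ℝ × ℝ)) : Finset ((ℝ × ℝ) × (ℝ × ℝ) × (ℝ × ℝ)) :=
  {z ∈ P ×ˢ P ×ˢ P | IsRightAngle z.1 z.2.1 z.2.2}

open scoped Classical in
/-- The triples `(a, c, d)` of points of `P` with a right angle at `a` and `c ≠ a ≠ d`. -/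
def corners (P : Finset (ℝ × ℝ)) : Finset ((ℝ × ℝ) × (ℝ × ℝ) × (ℝ × ℝ)) :=
  {z ∈ rightAngles P | z.1 ≠ z.2.1 ∧ z.1 ≠ z.2.2}

/-- The line through `a` and `c`, for a corner `z = (a, c, d)`. -/
def firstLeg (z : (ℝ × ℝ) × (ℝ × ℝ) × (ℝ × ℝ)) : Line := Line.through z.1 z.2.1

/-- The line through `a` and `d`, for a corner `z = (a, c, d)`. -/
def secondLeg (z : (ℝ × ℝ) × (ℝ × ℝ) × (ℝ × ℝ)) : Line := Line.through z.1 z.2.2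

open scoped Classical in
/-- The corners whose second leg is at most as rich in points of `P` as the first one. -/
def dominantCorners (P : Finset (ℝ × ℝ)) : Finset ((ℝ × ℝ) × (ℝ × ℝ) × (ℝ × ℝ)) :=
  {z ∈ corners P | #(pointsOn P (secondLeg z)) ≤ #(pointsOn P (firstLeg z))}

open scoped Classical in
/-- The lines spanned by two distinct points of `P`. -/
def spannedLines (P : Finset (ℝ × ℝ)) : Finset Line :=
  P.offDiag.image fun z => Line.through z.1 z.2

section Corners

variable {P : Finset (ℝ × ℝ)} {a c d : ℝ × ℝ} {l : Line}

lemma mem_rightAngles :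
    (a, c, d) ∈ rightAngles P ↔ (a ∈ P ∧ c ∈ P ∧ d ∈ P) ∧ IsRightAngle a c d := by
  simp [rightAngles]

lemma mem_corners :
    (a, c, d) ∈ corners P ↔ (a, c, d) ∈ rightAngles P ∧ a ≠ c ∧ a ≠ d := by
  simp [corners]

lemma card_corners_le_two_mul (P : Finset (ℝ × ℝ)) : #(corners P) ≤ 2 * #(dominantCorners P) := by
  classical
  have hcover : corners P ⊆
      dominantCorners P ∪ (dominantCorners P).image fun z => (z.1, z.2.swap) := by
    rintro ⟨a, c, d⟩ hz
    refine mem_union.2 ((le_total _ _).imp (fun hle => mem_filter.2 ⟨hz, hle⟩) fun hle =>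
      mem_image.2 ⟨(a, d, c), mem_filter.2 ⟨?_, hle⟩, rfl⟩)
    rw [mem_corners, mem_rightAngles] at hz ⊢
    exact ⟨⟨⟨hz.1.1.1, hz.1.1.2.2, hz.1.1.2.1⟩, hz.1.2.symm⟩, hz.2.symm⟩
  calc #(corners P) ≤ _ := card_le_card hcover
    _ ≤ #(dominantCorners P) + #((dominantCorners P).image fun z => (z.1, z.2.swap)) :=
        card_union_le _ _
    _ ≤ 2 * #(dominantCorners P) := by
        rw [two_mul]
        exact Nat.add_le_add_left card_image_le _

lemma two_le_card_pointsOn (hP : Set.InjOn Prod.fst (P : Set (ℝ × ℝ))) (hl : l ∈ spannedLines P) :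
    2 ≤ #(pointsOn P l) := by
  classical
  obtain ⟨⟨p, q⟩, hpq, rfl⟩ := mem_image.1 hl
  obtain ⟨hp, hq, hne⟩ := mem_offDiag.1 hpq
  exact one_lt_card.2 ⟨p, mem_pointsOn.2 ⟨hp, Line.left_mem_through p q⟩,
    q, mem_pointsOn.2 ⟨hq, Line.right_mem_through fun h => hne (hP hp hq h)⟩, hne⟩

lemma firstLeg_mem_spannedLines {z : (ℝ × ℝ) × (ℝ × ℝ) × (ℝ × ℝ)} (hz : z ∈ corners P) :
    firstLeg z ∈ spannedLines P := by
  classical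
  obtain ⟨a, c, d⟩ := z
  rw [mem_corners, mem_rightAngles] at hz
  exact mem_image.2 ⟨(a, c), mem_offDiag.2 ⟨hz.1.1.1, hz.1.1.2.1, hz.2.1⟩, rfl⟩

lemma fst_ne_of_mem_corners (hP : Set.InjOn Prod.fst (P : Set (ℝ × ℝ)))
    (h : (a, c, d) ∈ corners P) : a.1 ≠ c.1 ∧ a.1 ≠ d.1 := by
  rw [mem_corners, mem_rightAngles] at h
  obtain ⟨⟨⟨ha, hc, hd⟩, -⟩, hac, had⟩ := h
  exact ⟨fun heq => hac (hP ha hc heq), fun heq => had (hP ha hd heq)⟩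

lemma mem_pointsOn_firstLeg (hP : Set.InjOn Prod.fst (P : Set (ℝ × ℝ)))
    (h : (a, c, d) ∈ corners P) :
    a ∈ pointsOn P (firstLeg (a, c, d)) ∧ c ∈ pointsOn P (firstLeg (a, c, d)) := by
  have hac := (fst_ne_of_mem_corners hP h).1
  rw [mem_corners, mem_rightAngles] at h
  exact ⟨mem_pointsOn.2 ⟨h.1.1.1, Line.left_mem_through a c⟩,
    mem_pointsOn.2 ⟨h.1.1.2.1, Line.right_mem_through hac⟩⟩

open scoped Classical in
-- The vertex `a` of a corner is the foot of the perpendicular from `d` to the first leg.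
lemma card_corners_firstLeg_eq_le (hP : Set.InjOn Prod.fst (P : Set (ℝ × ℝ))) (l : Line) :
    #{z ∈ corners P | firstLeg z = l} ≤ #(pointsOn P l) * #P := by
  rw [← card_product]
  refine card_le_card_of_injOn Prod.snd ?_ ?_
  · rintro ⟨a, c, d⟩ hmem
    obtain ⟨hz, rfl⟩ := mem_filter.1 hmem
    exact mem_product.2 ⟨(mem_pointsOn_firstLeg hP hz).2,
      (mem_rightAngles.1 (mem_corners.1 hz).1).1.2.2⟩
  · rintro ⟨a, c, d⟩ hmem ⟨a', c', d'⟩ hmem' heq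
    obtain ⟨rfl, rfl⟩ := Prod.mk.inj heq
    obtain ⟨hz, rfl⟩ := mem_filter.1 hmem
    obtain ⟨hz', hleg⟩ := mem_filter.1 hmem'
    obtain ⟨ha, hc⟩ := mem_pointsOn_firstLeg hP hz
    obtain ⟨ha', -⟩ := hleg ▸ mem_pointsOn_firstLeg hP hz'
    have hfoot : a = a' := (mem_rightAngles.1 (mem_corners.1 hz).1).2.foot_unique
      (mem_rightAngles.1 (mem_corners.1 hz').1).2 (fst_ne_of_mem_corners hP hz).1
      (fst_ne_of_mem_corners hP hz').1 (mem_pointsOn.1 ha).2 (mem_pointsOn.1 ha').2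
      (mem_pointsOn.1 hc).2 (mem_pointsOn.1 hc).2
    rw [hfoot]

open scoped Classical in
lemma card_corners_fst_eq_le (hP : Set.InjOn Prod.fst (P : Set (ℝ × ℝ)))
    (hz : (a, c, d) ∈ corners P) :
    #{z ∈ corners P | (z.1, z.2.1) = (a, c)} ≤ #(pointsOn P (secondLeg (a, c, d))) := by
  obtain ⟨hac, had⟩ := fst_ne_of_mem_corners hP hz
  refine card_le_card_of_injOn (fun z => z.2.2) ?_ ?_
  · rintro ⟨a', c', d'⟩ hmem
    obtain ⟨hz', heq⟩ := mem_filter.1 hmem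
    obtain ⟨rfl, rfl⟩ := Prod.mk.inj heq
    obtain ⟨⟨-, -, hd'⟩, hperp'⟩ := mem_rightAngles.1 (mem_corners.1 hz').1
    exact mem_pointsOn.2
      ⟨hd', (mem_rightAngles.1 (mem_corners.1 hz).1).2.mem_through hperp' hac had⟩
  · intro z hz z' hz' heq
    obtain ⟨hfst, hsnd⟩ := Prod.mk.inj ((mem_filter.1 hz).2.trans (mem_filter.1 hz').2.symm)
    exact Prod.ext hfst (Prod.ext hsnd heq)

open scoped Classical in
lemma card_dominantCorners_firstLeg_eq_le (hP : Set.InjOn Prod.fst (P : Set (ℝ × ℝ))) (l : Line) :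
    #{z ∈ dominantCorners P | firstLeg z = l} ≤ #(pointsOn P l) ^ 3 := by
  set fiber := {z ∈ dominantCorners P | firstLeg z = l} with hfiber
  have hmem : ∀ z ∈ fiber, z ∈ corners P ∧ #(pointsOn P (secondLeg z)) ≤ #(pointsOn P (firstLeg z))
      ∧ firstLeg z = l := by
    simp only [hfiber, dominantCorners, mem_filter, and_assoc, imp_self, implies_true]
  have himage : fiber.image (fun z => (z.1, z.2.1)) ⊆ pointsOn P l ×ˢ pointsOn P l := by
    refine image_subset_iff.2 ?_
    rintro ⟨a, c, d⟩ hz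
    obtain ⟨hcorner, -, rfl⟩ := hmem _ hz
    exact mem_product.2 (mem_pointsOn_firstLeg hP hcorner)
  calc #fiber ≤ #(pointsOn P l) * #(fiber.image fun z => (z.1, z.2.1)) := by
        refine card_le_mul_card_image _ _ fun y hy => ?_
        obtain ⟨⟨a, c, d⟩, hz, rfl⟩ := mem_image.1 hy
        obtain ⟨hcorner, hdominant, hleg⟩ := hmem _ hz
        calc _ ≤ #{z ∈ corners P | (z.1, z.2.1) = (a, c)} :=
              card_le_card (filter_subset_filter _ fun z hz => (hmem z hz).1)
          _ ≤ #(pointsOn P (secondLeg (a, c, d))) := card_corners_fst_eq_le hP hcorner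
          _ ≤ #(pointsOn P l) := hleg ▸ hdominant
    _ ≤ #(pointsOn P l) * #(pointsOn P l ×ˢ pointsOn P l) :=
        Nat.mul_le_mul_left _ (card_le_card himage)
    _ = #(pointsOn P l) ^ 3 := by rw [card_product]; ring

lemma card_dominantCorners_le (hP : Set.InjOn Prod.fst (P : Set (ℝ × ℝ))) :
    (#(dominantCorners P) : ℝ) ≤ 10 ^ 6 * #P ^ 2 * (1 + log #P) := by
  classical
  set rich := {l ∈ spannedLines P | #P < #(pointsOn P l) ^ 2}
  set poor := {l ∈ spannedLines P | ¬ #P < #(pointsOn P l) ^ 2}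
  have hrich : ∑ l ∈ rich, (#(pointsOn P l) : ℝ) ≤ (2 * 576 ^ 2 + 6) * #P :=
    sum_card_pointsOn_le_mul_card hP
      (fun l hl => two_le_card_pointsOn hP (mem_filter.1 hl).1) fun l hl => (mem_filter.1 hl).2
  have hpoor : ∑ l ∈ poor, (#(pointsOn P l) : ℝ) ^ 3 ≤ 1728 * #P ^ 2 * (1 + log #P) :=
    sum_card_pointsOn_pow_three_le hP
      (fun l hl => two_le_card_pointsOn hP (mem_filter.1 hl).1)
      fun l hl => not_lt.1 (mem_filter.1 hl).2
  have hfibers : #(dominantCorners P) ≤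
      (∑ l ∈ rich, #(pointsOn P l)) * #P + ∑ l ∈ poor, #(pointsOn P l) ^ 3 := by
    have hmaps : ∀ z ∈ dominantCorners P, firstLeg z ∈ spannedLines P := fun z hz =>
      firstLeg_mem_spannedLines (mem_filter.1 hz).1
    rw [card_eq_sum_card_fiberwise hmaps,
      ← sum_filter_add_sum_filter_not _ fun l => #P < #(pointsOn P l) ^ 2, sum_mul]
    refine add_le_add (sum_le_sum fun l _ => ?_)
      (sum_le_sum fun l _ => card_dominantCorners_firstLeg_eq_le hP l)
    exact (card_le_card (filter_subset_filter _ (filter_subset _ _))).trans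
      (card_corners_firstLeg_eq_le hP l)
  have hlog : 0 ≤ (#P : ℝ) ^ 2 * log #P := by
    have := log_natCast_nonneg #P
    positivity
  calc (#(dominantCorners P) : ℝ)
      ≤ (∑ l ∈ rich, (#(pointsOn P l) : ℝ)) * #P + ∑ l ∈ poor, (#(pointsOn P l) : ℝ) ^ 3 :=
        mod_cast hfibers
    _ ≤ (2 * 576 ^ 2 + 6) * #P * #P + 1728 * #P ^ 2 * (1 + log #P) := by gcongr
    _ ≤ 10 ^ 6 * #P ^ 2 * (1 + log #P) := by linarith [sq_nonneg (#P : ℝ)]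

end Corners

/-- The rotation of the plane by the angle `-arctan t`, scaled by `√(1 + t ^ 2)`. -/
def scaledRotation (t : ℝ) (p : ℝ × ℝ) : ℝ × ℝ := (p.1 + t * p.2, p.2 - t * p.1)

lemma IsRightAngle.map_scaledRotation {a c d : ℝ × ℝ} (h : IsRightAngle a c d) (t : ℝ) :
    IsRightAngle (scaledRotation t a) (scaledRotation t c) (scaledRotation t d) := by
  unfold IsRightAngle scaledRotation at *
  linear_combination (1 + t ^ 2) * h

lemma exists_injOn_fst_scaledRotation (P : Finset (ℝ × ℝ)) :
    ∃ t, Set.InjOn (fun p => (scaledRotation t p).1) (P : Set (ℝ × ℝ)) := by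
  obtain ⟨t, ht⟩ := Infinite.exists_notMem_finset
    (P.offDiag.image fun z => (z.2.1 - z.1.1) / (z.1.2 - z.2.2))
  refine ⟨t, fun p hp q hq heq => ?_⟩
  simp only [scaledRotation] at heq
  by_contra hne
  have hsnd : p.2 - q.2 ≠ 0 := fun hsnd =>
    hne (Prod.ext (by linear_combination heq - t * hsnd) (sub_eq_zero.1 hsnd))
  refine ht (mem_image.2 ⟨(p, q), mem_offDiag.2 ⟨hp, hq, hne⟩, ?_⟩)
  rw [div_eq_iff hsnd]
  linear_combination -heq

lemma card_corners_le_card_corners_image {φ : ℝ × ℝ → ℝ × ℝ} {P : Finset (ℝ × ℝ)}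
    (hinj : Set.InjOn φ (P : Set (ℝ × ℝ)))
    (hφ : ∀ a c d, IsRightAngle a c d → IsRightAngle (φ a) (φ c) (φ d)) :
    #(corners P) ≤ #(corners (P.image φ)) := by
  refine card_le_card_of_injOn (Prod.map φ (Prod.map φ φ)) ?_
    ((hinj.prodMap (hinj.prodMap hinj)).mono ?_)
  · rintro ⟨a, c, d⟩ hz
    obtain ⟨hz, hac, had⟩ := mem_corners.1 hz
    obtain ⟨⟨ha, hc, hd⟩, h⟩ := mem_rightAngles.1 hz
    exact mem_corners.2 ⟨mem_rightAngles.2 ⟨⟨mem_image_of_mem φ ha, mem_image_of_mem φ hc,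
      mem_image_of_mem φ hd⟩, hφ a c d h⟩, hinj.ne ha hc hac, hinj.ne ha hd had⟩
  · rintro ⟨a, c, d⟩ hz
    exact (mem_rightAngles.1 (mem_corners.1 hz).1).1

lemma card_corners_le (P : Finset (ℝ × ℝ)) :
    (#(corners P) : ℝ) ≤ 2 * 10 ^ 6 * #P ^ 2 * (1 + log #P) := by
  obtain ⟨t, ht⟩ := exists_injOn_fst_scaledRotation P
  have hinj : Set.InjOn (scaledRotation t) (P : Set (ℝ × ℝ)) := fun p hp q hq heq =>
    ht hp hq (congrArg Prod.fst heq)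
  set Q := P.image (scaledRotation t)
  have hQ : Set.InjOn Prod.fst (Q : Set (ℝ × ℝ)) := by
    rw [coe_image]
    exact ht.image_of_comp
  have hdominant := card_dominantCorners_le hQ
  have hcorners : (#(corners P) : ℝ) ≤ 2 * #(dominantCorners Q) :=
    mod_cast (card_corners_le_card_corners_image hinj fun _ _ _ h => h.map_scaledRotation t).trans
      (card_corners_le_two_mul Q)
  rw [card_image_of_injOn hinj] at hdominant
  linarith

lemma card_rightAngles_le_add (P : Finset (ℝ × ℝ)) :
    #(rightAngles P) ≤ #(corners P) + 2 * #P ^ 2 := by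
  classical
  set diag₁ := (P ×ˢ P).image fun z => (z.1, z.1, z.2)
  set diag₂ := (P ×ˢ P).image fun z => (z.1, z.2, z.1)
  have hcover : rightAngles P ⊆ corners P ∪ (diag₁ ∪ diag₂) := by
    rintro ⟨a, c, d⟩ hz
    obtain ⟨⟨ha, hc, hd⟩, -⟩ := mem_rightAngles.1 hz
    rcases eq_or_ne a c with rfl | hac
    · exact mem_union_right _ (mem_union_left _ (mem_image.2 ⟨(a, d), mk_mem_product ha hd, rfl⟩))
    rcases eq_or_ne a d with rfl | had
    · exact mem_union_right _ (mem_union_right _ (mem_image.2 ⟨(a, c), mk_mem_product ha hc, rfl⟩))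
    exact mem_union_left _ (mem_corners.2 ⟨hz, hac, had⟩)
  have hdiag₁ : #diag₁ ≤ #P ^ 2 := by
    rw [sq, ← card_product]
    exact card_image_le
  have hdiag₂ : #diag₂ ≤ #P ^ 2 := by
    rw [sq, ← card_product]
    exact card_image_le
  calc #(rightAngles P) ≤ _ := card_le_card hcover
    _ ≤ #(corners P) + (#diag₁ + #diag₂) :=
        (card_union_le _ _).trans (Nat.add_le_add_left (card_union_le _ _) _)
    _ ≤ #(corners P) + 2 * #P ^ 2 := by lia

lemma card_rightAngles_le (P : Finset (ℝ × ℝ)) :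
    (#(rightAngles P) : ℝ) ≤ 3 * 10 ^ 6 * #P ^ 2 * (1 + log #P) := by
  have hcorners := card_corners_le P
  have hdegenerate : (#(rightAngles P) : ℝ) ≤ #(corners P) + 2 * #P ^ 2 :=
    mod_cast card_rightAngles_le_add P
  have hlog : 0 ≤ (#P : ℝ) ^ 2 * log #P := by
    have := log_natCast_nonneg #P
    positivity
  linarith

/-! ### Energy on the paraboloid -/

/-- The elliptic paraboloid `z = x ^ 2 + y ^ 2`, without truncation. -/
def paraboloid : Set (EuclideanSpace ℝ (Fin 3)) := {v | v 2 = v 0 ^ 2 + v 1 ^ 2}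

/-- The orthogonal projection of a vector in space to the horizontal plane. -/
def planeProjection (v : EuclideanSpace ℝ (Fin 3)) : ℝ × ℝ := (v 0, v 1)

lemma injOn_planeProjection : Set.InjOn planeProjection paraboloid := by
  intro v hv w hw heq
  obtain ⟨h₀, h₁⟩ := Prod.mk.inj heq
  have h₂ : v 2 = w 2 := by rw [hv, hw, h₀, h₁]
  ext i
  fin_cases i <;> assumption

lemma isRightAngle_planeProjection {a b c d : EuclideanSpace ℝ (Fin 3)} (ha : a ∈ paraboloid)
    (hb : b ∈ paraboloid) (hc : c ∈ paraboloid) (hd : d ∈ paraboloid) (h : a + b = c + d) :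
    IsRightAngle (planeProjection a) (planeProjection c) (planeProjection d) := by
  have hcoord (i : Fin 3) : a i + b i = c i + d i := by
    simpa using congrArg (fun v : EuclideanSpace ℝ (Fin 3) => v i) h
  have h₂ := hcoord 2
  rw [ha, hb, hc, hd, eq_sub_of_add_eq' (hcoord 0), eq_sub_of_add_eq' (hcoord 1)] at h₂
  simp only [IsRightAngle, planeProjection]
  linear_combination h₂ / 2

open scoped Classical in
lemma energy_two_le_card_rightAngles {Λ : Finset (EuclideanSpace ℝ (Fin 3))}
    (hΛ : (Λ : Set (EuclideanSpace ℝ (Fin 3))) ⊆ paraboloid) :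
    energy 2 (Λ : Set (EuclideanSpace ℝ (Fin 3))) ≤ #(rightAngles (Λ.image planeProjection)) := by
  have hinj := injOn_planeProjection.mono hΛ
  unfold energy
  rw [← Nat.card_eq_finsetCard]
  refine Nat.card_le_card_of_injective (fun fg => ⟨(planeProjection (fg.1.1 0),
    planeProjection (fg.1.2 0), planeProjection (fg.1.2 1)), ?_⟩) ?_
  · obtain ⟨⟨f, g⟩, hf, hg, hsum⟩ := fg
    rw [Fin.sum_univ_two, Fin.sum_univ_two] at hsum
    exact mem_rightAngles.2 ⟨⟨mem_image_of_mem _ (hf 0), mem_image_of_mem _ (hg 0),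
      mem_image_of_mem _ (hg 1)⟩,
      isRightAngle_planeProjection (hΛ (hf 0)) (hΛ (hf 1)) (hΛ (hg 0)) (hΛ (hg 1)) hsum⟩
  · rintro ⟨⟨f, g⟩, hf, hg, hsum⟩ ⟨⟨f', g'⟩, hf', hg', hsum'⟩ heq
    simp only [Subtype.mk.injEq, Prod.mk.injEq] at heq
    have hf₀ : f 0 = f' 0 := hinj (hf 0) (hf' 0) heq.1
    obtain rfl : g = g' := funext (Fin.forall_fin_two.2
      ⟨hinj (hg 0) (hg' 0) heq.2.1, hinj (hg 1) (hg' 1) heq.2.2⟩)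
    have hf₁ : f 1 = f' 1 := by
      have hsums := hsum.trans hsum'.symm
      simp only [Fin.sum_univ_two, hf₀] at hsums
      exact add_left_cancel hsums
    obtain rfl : f = f' := funext (Fin.forall_fin_two.2 ⟨hf₀, hf₁⟩)
    rfl

lemma energy_two_le_of_subset_paraboloid {Λ : Set (EuclideanSpace ℝ (Fin 3))} (hΛ : Λ.Finite)
    (hsub : Λ ⊆ paraboloid) :
    (energy 2 Λ : ℝ) ≤ 3 * 10 ^ 6 * (Λ.ncard : ℝ) ^ 2 * (1 + log Λ.ncard) := by
  classical
  lift Λ to Finset (EuclideanSpace ℝ (Fin 3)) using hΛ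
  rw [Set.ncard_coe_finset, ← card_image_of_injOn (injOn_planeProjection.mono hsub)]
  exact (Nat.cast_le.2 (energy_two_le_card_rightAngles hsub)).trans (card_rightAngles_le _)

lemma sq_mul_one_add_log_le (N : ℕ) {ε : ℝ} (hε : 0 < ε) :
    (N : ℝ) ^ 2 * (1 + log N) ≤ (1 + 1 / ε) * (N : ℝ) ^ (2 + ε) := by
  rcases N.eq_zero_or_pos with rfl | hN
  · simp [Real.zero_rpow (by positivity : 2 + ε ≠ 0)]
  have hN : (1 : ℝ) ≤ N := mod_cast hN
  have hone : 1 ≤ (N : ℝ) ^ ε := one_le_rpow hN hε.le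
  have hlog : log N ≤ (N : ℝ) ^ ε / ε := log_le_rpow_div N.cast_nonneg hε
  calc (N : ℝ) ^ 2 * (1 + log N) ≤ (N : ℝ) ^ 2 * ((N : ℝ) ^ ε + (N : ℝ) ^ ε / ε) := by gcongr
    _ = (1 + 1 / ε) * (N : ℝ) ^ (2 + ε) := by
        rw [rpow_add (zero_lt_one.trans_le hN), rpow_two]
        ring

theorem additive_energy_P2_general :
    ∀ ε > (0 : ℝ), ∃ C > (0 : ℝ),
      ∀ Λ : Set (EuclideanSpace ℝ (Fin 3)), Λ.Finite → Λ ⊆ paraboloid →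
        (energy 2 Λ : ℝ) ≤ C * (Λ.ncard : ℝ) ^ ((2 : ℝ) + ε) := by
  intro ε hε
  refine ⟨3 * 10 ^ 6 * (1 + 1 / ε), by positivity, fun Λ hΛ hsub => ?_⟩
  calc (energy 2 Λ : ℝ) ≤ 3 * 10 ^ 6 * (Λ.ncard : ℝ) ^ 2 * (1 + log Λ.ncard) :=
        energy_two_le_of_subset_paraboloid hΛ hsub
    _ = 3 * 10 ^ 6 * ((Λ.ncard : ℝ) ^ 2 * (1 + log Λ.ncard)) := mul_assoc _ _ _
    _ ≤ 3 * 10 ^ 6 * ((1 + 1 / ε) * (Λ.ncard : ℝ) ^ (2 + ε)) := by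
        gcongr ?_ * ?_
        exact sq_mul_one_add_log_le _ hε
    _ = 3 * 10 ^ 6 * (1 + 1 / ε) * (Λ.ncard : ℝ) ^ ((2 : ℝ) + ε) := (mul_assoc _ _ _).symm

theorem additive_energy_P2 :
    ∀ ε > (0 : ℝ), ∃ C > (0 : ℝ),
      ∀ Λ : Set (EuclideanSpace ℝ (Fin 3)), Λ.Finite → Λ ⊆ parab2 →
        (energy 2 Λ : ℝ) ≤ C * (Λ.ncard : ℝ) ^ ((2 : ℝ) + ε) := by
  intro ε hε
  obtain ⟨C, hC, h⟩ := additive_energy_P2_general ε hε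
  exact ⟨C, hC, fun Λ hΛ hsub => h Λ hΛ fun v hv => (hsub hv).2.2⟩

end
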